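/- Let ρ be any n-qubit density matrix, S ⊆ Fin n nonempty with |S| = s, and P(q) = tr(ρ |Φ̃_q⟩⟨Φ̃_q|), q ∈ {1,2,3,4}^S, the product SIC-POVM outcome distribution. Then: (i) P(q) ≤ 2^{−s} for every q; and (ii) Σ_q P(q)³ ≤ 2^{−s} · Σ_q P(q)². Moreover, if ρ = |ψ⟩⟨ψ| is pure then Σ_q P(q)² ≤ 3^{−s}, and hence Σ_q P(q)³ ≤ 6^{−s}. -/

import Mathlib

open Matrix MeasureTheory
open scoped BigOperators ComplexConjugate Kronecker ComplexOrder

/-- `n`-qubit operators: matrices indexed by functions `Fin n → Fin 2`. -/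
abbrev QMat (n : ℕ) : Type := Matrix (Fin n → Fin 2) (Fin n → Fin 2) ℂ

/-- Combine an assignment on `α` and one on its complement into a full index. -/
noncomputable def embedIdx {n : ℕ} (α : Finset (Fin n)) (i : {x : Fin n // x ∈ α} → Fin 2)
    (k : {x : Fin n // x ∉ α} → Fin 2) : Fin n → Fin 2 :=
  fun x => if h : x ∈ α then i ⟨x, h⟩ else k ⟨x, h⟩

/-- The reduced density matrix on the qubits in `α` (partial trace over the rest). -/
noncomputable def reduced {n : ℕ} (ρ : QMat n) (α : Finset (Fin n)) :
    Matrix ({x : Fin n // x ∈ α} → Fin 2) ({x : Fin n // x ∈ α} → Fin 2) ℂ :=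
  fun i j => ∑ k : ({x : Fin n // x ∉ α} → Fin 2), ρ (embedIdx α i k) (embedIdx α j k)

/-- The concentratable entanglement `C_ψ(S) = 1 - 2^{-|S|} ∑_{α ⊆ S} tr(ρ_α²)`. -/
noncomputable def CE {n : ℕ} (ρ : QMat n) (S : Finset (Fin n)) : ℝ :=
  1 - (1 / 2 : ℝ) ^ S.card *
    ∑ α ∈ S.powerset, (Matrix.trace (reduced ρ α * reduced ρ α)).re

/-- Tensor product of single-qubit operators on the qubits in `S`, identity elsewhere. -/
noncomputable def localOp {n : ℕ} (S : Finset (Fin n))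
    (V : {i : Fin n // i ∈ S} → Matrix (Fin 2) (Fin 2) ℂ) : QMat n :=
  fun x y => ∏ i : Fin n,
    if h : i ∈ S then V ⟨i, h⟩ (x i) (y i)
    else (if x i = y i then 1 else 0)

/-- The four SIC vectors `φ₁, …, φ₄` in `ℂ²`. -/
noncomputable def sicVec : Fin 4 → Fin 2 → ℂ :=
  ![![1, 0],
    ![((1 / Real.sqrt 3 : ℝ) : ℂ), ((Real.sqrt (2/3) : ℝ) : ℂ)],
    ![((1 / Real.sqrt 3 : ℝ) : ℂ),
      ((Real.sqrt (2/3) : ℝ) : ℂ) * Complex.exp (2 * Real.pi * Complex.I / 3)],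
    ![((1 / Real.sqrt 3 : ℝ) : ℂ),
      ((Real.sqrt (2/3) : ℝ) : ℂ) * Complex.exp (4 * Real.pi * Complex.I / 3)]]

/-- The rescaled SIC-POVM vectors `φ̃ᵢ = φᵢ/√2`. -/
noncomputable def sicTilde (i : Fin 4) : Fin 2 → ℂ :=
  fun a => sicVec i a / ((Real.sqrt 2 : ℝ) : ℂ)

/-- The product SIC-POVM element `|Φ̃_q⟩⟨Φ̃_q| = ⊗_{i∈S} |φ̃_{qᵢ}⟩⟨φ̃_{qᵢ}|` on the qubits
in `S`, identity elsewhere. -/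
noncomputable def sicProj {n : ℕ} (S : Finset (Fin n))
    (q : {i : Fin n // i ∈ S} → Fin 4) : QMat n :=
  localOp S (fun i => Matrix.vecMulVec (sicTilde (q i)) (star (sicTilde (q i))))

/-- The SIC-POVM outcome probability `P(q) = tr(ρ |Φ̃_q⟩⟨Φ̃_q|)`. -/
noncomputable def sicBorn {n : ℕ} (ρ : QMat n) (S : Finset (Fin n))
    (q : {i : Fin n // i ∈ S} → Fin 4) : ℝ :=
  (Matrix.trace (ρ * sicProj S q)).re

/-- The one-qubit factor at site `i` of `sicProj S q`. -/
noncomputable def sicFactor {n : ℕ} (S : Finset (Fin n)) (q : {i : Fin n // i ∈ S} → Fin 4)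
    (i : Fin n) : Matrix (Fin 2) (Fin 2) ℂ :=
  if h : i ∈ S then vecMulVec (sicTilde (q ⟨i, h⟩)) (star (sicTilde (q ⟨i, h⟩))) else 1

lemma sicProj_apply {n : ℕ} (S : Finset (Fin n)) (q : {i : Fin n // i ∈ S} → Fin 4)
    (x y : Fin n → Fin 2) : sicProj S q x y = ∏ i, sicFactor S q i (x i) (y i) := by
  unfold sicProj localOp sicFactor
  refine Finset.prod_congr rfl fun i _ => ?_
  split_ifs <;> simp_all [Matrix.one_apply]

lemma exp_two_pi_div_three_pow_three :
    Complex.exp (2 * Real.pi * Complex.I / 3) ^ 3 = 1 := by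
  rw [← Complex.exp_nat_mul, ← Complex.exp_two_pi_mul_I]
  congr 1
  push_cast
  ring

lemma exp_four_pi_div_three :
    Complex.exp (4 * Real.pi * Complex.I / 3) = Complex.exp (2 * Real.pi * Complex.I / 3) ^ 2 := by
  rw [← Complex.exp_nat_mul]
  congr 1
  push_cast
  ring

lemma exp_two_pi_div_three_geom :
    1 + Complex.exp (2 * Real.pi * Complex.I / 3)
      + Complex.exp (2 * Real.pi * Complex.I / 3) ^ 2 = 0 := by
  have h := (Complex.isPrimitiveRoot_exp 3 (by norm_num)).geom_sum_eq_zero (by norm_num)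
  simpa [Finset.sum_range_succ] using h

lemma conj_exp_two_pi_div_three :
    conj (Complex.exp (2 * Real.pi * Complex.I / 3))
      = Complex.exp (2 * Real.pi * Complex.I / 3) ^ 2 := by
  have h : conj (Complex.exp (2 * Real.pi * Complex.I / 3))
      * Complex.exp (2 * Real.pi * Complex.I / 3) = 1 := by
    rw [← Complex.exp_conj, ← Complex.exp_add, ← Complex.exp_zero]
    congr 1
    simp only [map_mul, map_div₀, map_ofNat, Complex.conj_ofReal, Complex.conj_I]
    ring
  linear_combination (Complex.exp (2 * Real.pi * Complex.I / 3) ^ 2) * h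
    - conj (Complex.exp (2 * Real.pi * Complex.I / 3)) * exp_two_pi_div_three_pow_three

/-- The SIC-POVM elements have weight `1/2`. -/
lemma star_sicTilde_dotProduct (j : Fin 4) : star (sicTilde j) ⬝ᵥ sicTilde j = 1 / 2 := by
  have h2 : ((√2 : ℝ) : ℂ) ^ 2 = 2 := by norm_cast; simp
  have h3 : ((√3 : ℝ) : ℂ) ^ 2 = 3 := by norm_cast; simp
  have n2 : ((√2 : ℝ) : ℂ) ≠ 0 := by norm_cast; simp
  have n3 : ((√3 : ℝ) : ℂ) ≠ 0 := by norm_cast; simp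
  have hc := conj_exp_two_pi_div_three
  have hw := exp_two_pi_div_three_pow_three
  fin_cases j <;>
    simp [sicTilde, sicVec, dotProduct, Fin.sum_univ_two, exp_four_pi_div_three, hc] <;>
    generalize Complex.exp (2 * Real.pi * Complex.I / 3) = w at * <;>
    field_simp <;> grind

/-- The SIC-POVM is a two-design: its second moment is one third of the projector onto the
symmetric subspace. -/
lemma sum_sic_mul_sic (a b c d : Fin 2) :
    ∑ j, vecMulVec (sicTilde j) (star (sicTilde j)) a b
        * vecMulVec (sicTilde j) (star (sicTilde j)) c d
      = 1 / 6 * (if a = b ∧ c = d then 1 else 0) + 1 / 6 * (if a = d ∧ c = b then 1 else 0) := by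
  have h2 : ((√2 : ℝ) : ℂ) ^ 2 = 2 := by norm_cast; simp
  have h3 : ((√3 : ℝ) : ℂ) ^ 2 = 3 := by norm_cast; simp
  have n2 : ((√2 : ℝ) : ℂ) ≠ 0 := by norm_cast; simp
  have n3 : ((√3 : ℝ) : ℂ) ≠ 0 := by norm_cast; simp
  have hc := conj_exp_two_pi_div_three
  have hw := exp_two_pi_div_three_pow_three
  have hg := exp_two_pi_div_three_geom
  fin_cases a <;> fin_cases b <;> fin_cases c <;> fin_cases d <;>
    simp [sicTilde, sicVec, vecMulVec_apply, Fin.sum_univ_four, exp_four_pi_div_three, hc] <;>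
    generalize Complex.exp (2 * Real.pi * Complex.I / 3) = w at * <;>
    field_simp <;> grind

lemma sicFactor_isHermitian {n : ℕ} (S : Finset (Fin n)) (q : {i : Fin n // i ∈ S} → Fin 4)
    (i : Fin n) : (sicFactor S q i).IsHermitian := by
  unfold sicFactor
  split_ifs
  · exact (posSemidef_vecMulVec_self_star _).isHermitian
  · exact isHermitian_one

lemma sicFactor_mul_self {n : ℕ} (S : Finset (Fin n)) (q : {i : Fin n // i ∈ S} → Fin 4)
    (i : Fin n) :
    sicFactor S q i * sicFactor S q i = (if i ∈ S then (1 / 2 : ℂ) else 1) • sicFactor S q i := by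
  unfold sicFactor
  split_ifs
  · rw [vecMulVec_mul_vecMulVec, star_sicTilde_dotProduct]
    ext; simp [vecMulVec_apply]; ring
  · simp

lemma sicProj_isHermitian {n : ℕ} (S : Finset (Fin n)) (q : {i : Fin n // i ∈ S} → Fin 4) :
    (sicProj S q).IsHermitian := by
  ext x y
  simp only [conjTranspose_apply, sicProj_apply, star_prod]
  exact Finset.prod_congr rfl fun i _ => (sicFactor_isHermitian S q i).apply _ _

lemma sicProj_mul_self {n : ℕ} (S : Finset (Fin n)) (q : {i : Fin n // i ∈ S} → Fin 4) :
    sicProj S q * sicProj S q = (1 / 2 : ℂ) ^ S.card • sicProj S q := by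
  ext x y
  simp only [mul_apply, sicProj_apply, Matrix.smul_apply, smul_eq_mul, ← Finset.prod_mul_distrib]
  have h := Finset.prod_univ_sum (fun _ : Fin n => (Finset.univ : Finset (Fin 2)))
    (fun i c => sicFactor S q i (x i) c * sicFactor S q i c (y i))
  rw [Fintype.piFinset_univ] at h
  rw [← h]
  have hi (i : Fin n) : ∑ c, sicFactor S q i (x i) c * sicFactor S q i c (y i)
      = (if i ∈ S then (1 / 2 : ℂ) else 1) * sicFactor S q i (x i) (y i) := by
    rw [← mul_apply, sicFactor_mul_self]
    simp
  simp_rw [hi, Finset.prod_mul_distrib]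
  simp [Finset.prod_ite_mem]

lemma trace_mul_nonneg_of_mul_self {n : ℕ} {ρ A : QMat n} (hρ : ρ.PosSemidef)
    (hA : A.IsHermitian) : 0 ≤ (trace (ρ * (A * A))).re := by
  have h := (hρ.conjTranspose_mul_mul_same A).trace_nonneg
  rw [hA.eq, mul_assoc, trace_mul_comm, mul_assoc] at h
  exact (Complex.le_def.mp h).1

lemma sicBorn_le {n : ℕ} {ρ : QMat n} (hρ : ρ.PosSemidef) (htr : trace ρ = 1)
    (S : Finset (Fin n)) (q : {i : Fin n // i ∈ S} → Fin 4) :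
    sicBorn ρ S q ≤ (1 / 2 : ℝ) ^ S.card := by
  set c : ℝ := (1 / 2 : ℝ) ^ S.card with hc
  have hcpos : 0 < c := by positivity
  have hmul : sicProj S q * sicProj S q = (c : ℂ) • sicProj S q := by
    rw [sicProj_mul_self, hc]
    push_cast
    rfl
  have hA : ((c : ℂ) • (1 : QMat n) - sicProj S q).IsHermitian := by
    refine IsHermitian.sub ?_ (sicProj_isHermitian S q)
    simp [IsHermitian, conjTranspose_smul]
  have h := trace_mul_nonneg_of_mul_self hρ hA
  have hsq : ((c : ℂ) • (1 : QMat n) - sicProj S q) * ((c : ℂ) • (1 : QMat n) - sicProj S q)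
      = (c : ℂ) • ((c : ℂ) • (1 : QMat n) - sicProj S q) := by
    simp only [sub_mul, mul_sub, hmul, smul_mul_assoc, mul_smul_comm, one_mul, mul_one, smul_sub]
    abel
  rw [hsq] at h
  simp only [mul_smul_comm, mul_sub, mul_one, trace_smul, trace_sub, htr, smul_eq_mul,
    Complex.re_ofReal_mul, Complex.sub_re, Complex.ofReal_re] at h
  rw [← mul_sub] at h
  exact sub_nonneg.mp (nonneg_of_mul_nonneg_right h hcpos)

lemma ofReal_sicBorn {n : ℕ} {ρ : QMat n} (hρ : ρ.IsHermitian)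
    (S : Finset (Fin n)) (q : {i : Fin n // i ∈ S} → Fin 4) :
    (sicBorn ρ S q : ℂ) = trace (ρ * sicProj S q) := by
  refine Complex.conj_eq_iff_re.mp ?_
  rw [← Complex.star_def, ← trace_conjTranspose, conjTranspose_mul, hρ.eq,
    (sicProj_isHermitian S q).eq, trace_mul_comm]

lemma sum_prod_sicFactor {n : ℕ} (S : Finset (Fin n)) (a b c d : Fin n → Fin 2) :
    ∑ q : {i : Fin n // i ∈ S} → Fin 4,
        (∏ i, sicFactor S q i (a i) (b i)) * ∏ i, sicFactor S q i (c i) (d i)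
      = ∏ i, ((if i ∈ S then 1 / 6 else 0) * (if a i = d i ∧ c i = b i then 1 else 0)
          + (if i ∈ S then 1 / 6 else 1) * (if a i = b i ∧ c i = d i then 1 else 0) : ℂ) := by
  simp_rw [← Finset.prod_mul_distrib]
  have hsplit (f : Fin n → ℂ) :
      ∏ i, f i = (∏ i : {i // i ∈ S}, f i) * ∏ i : {i // i ∉ S}, f i := by
    convert (Fintype.prod_subtype_mul_prod_subtype (fun i => i ∈ S) f).symm
  simp_rw [hsplit]
  have hin (q : {i : Fin n // i ∈ S} → Fin 4) (i : {i : Fin n // i ∈ S}) :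
      sicFactor S q i = vecMulVec (sicTilde (q i)) (star (sicTilde (q i))) := by
    simp [sicFactor]
  have hout (q : {i : Fin n // i ∈ S} → Fin 4) (i : {i : Fin n // i ∉ S}) :
      sicFactor S q i = 1 := by
    simp [sicFactor, i.2]
  simp_rw [hin, hout, ← Finset.sum_mul]
  congr 1
  · have h := Finset.prod_univ_sum (fun _ : {i : Fin n // i ∈ S} => (Finset.univ : Finset (Fin 4)))
      (fun i j => vecMulVec (sicTilde j) (star (sicTilde j)) (a i) (b i)
        * vecMulVec (sicTilde j) (star (sicTilde j)) (c i) (d i))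
    rw [Fintype.piFinset_univ] at h
    rw [← h]
    refine Finset.prod_congr rfl fun i _ => ?_
    rw [sum_sic_mul_sic, if_pos i.2, if_pos i.2, add_comm]
  · refine Finset.prod_congr rfl fun i _ => ?_
    simp only [i.2, one_apply, if_false, zero_mul, zero_add, one_mul, ite_and, ite_mul]

/-- Exchange the coordinates in `T` between two assignments. -/
def swapOn {n : ℕ} (T : Finset (Fin n)) (p : (Fin n → Fin 2) × (Fin n → Fin 2)) :
    (Fin n → Fin 2) × (Fin n → Fin 2) :=
  (fun i => if i ∈ T then p.2 i else p.1 i, fun i => if i ∈ T then p.1 i else p.2 i)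

lemma swapOn_involutive {n : ℕ} (T : Finset (Fin n)) : Function.Involutive (swapOn T) := by
  intro p
  ext i <;> by_cases h : i ∈ T <;> simp [swapOn, h]

lemma prod_swap_indicator {n : ℕ} (T : Finset (Fin n)) (p r : (Fin n → Fin 2) × (Fin n → Fin 2)) :
    (∏ i ∈ T, if r.1 i = p.2 i ∧ r.2 i = p.1 i then (1 : ℂ) else 0)
        * (∏ i ∈ Finset.univ \ T, if r.1 i = p.1 i ∧ r.2 i = p.2 i then (1 : ℂ) else 0)
      = if r = swapOn T p then 1 else 0 := by
  rw [Finset.prod_ite_zero, Finset.prod_ite_zero]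
  simp only [Finset.prod_const_one, ← ite_and, mul_ite, mul_one, mul_zero]
  refine if_congr ?_ rfl rfl
  simp only [swapOn, Prod.ext_iff, funext_iff, Finset.mem_sdiff, Finset.mem_univ, true_and]
  grind

/-- The second moment of the SIC outcome distribution as a mixture of swap expectations. -/
lemma sum_sicBorn_sq {n : ℕ} {ρ : QMat n} (hρ : ρ.IsHermitian) (S : Finset (Fin n)) :
    ((∑ q : {i : Fin n // i ∈ S} → Fin 4, sicBorn ρ S q ^ 2 : ℝ) : ℂ)
      = ∑ T : Finset (Fin n), ((∏ i ∈ T, if i ∈ S then 1 / 6 else 0)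
          * ∏ i ∈ Finset.univ \ T, if i ∈ S then 1 / 6 else 1)
        * ∑ p, ρ p.1 (swapOn T p).1 * ρ p.2 (swapOn T p).2 := by
  have hp (q : {i : Fin n // i ∈ S} → Fin 4) : (sicBorn ρ S q : ℂ) ^ 2
      = ∑ p : (Fin n → Fin 2) × (Fin n → Fin 2), ∑ r : (Fin n → Fin 2) × (Fin n → Fin 2),
        ρ p.1 r.1 * ρ p.2 r.2 * ((∏ i, sicFactor S q i (r.1 i) (p.1 i))
          * ∏ i, sicFactor S q i (r.2 i) (p.2 i)) := by
    rw [ofReal_sicBorn hρ, sq]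
    simp only [trace, diag_apply, mul_apply, sicProj_apply, Fintype.sum_mul_sum,
      Fintype.sum_prod_type]
    refine Finset.sum_congr rfl fun _ _ => Finset.sum_congr rfl fun _ _ =>
      Finset.sum_congr rfl fun _ _ => Finset.sum_congr rfl fun _ _ => ?_
    ring
  push_cast
  simp_rw [hp]
  rw [Finset.sum_comm]
  simp_rw [Finset.sum_comm (s := (Finset.univ : Finset ({i : Fin n // i ∈ S} → Fin 4))),
    ← Finset.mul_sum, sum_prod_sicFactor, Finset.prod_add, Finset.prod_mul_distrib,
    Finset.powerset_univ, Finset.mul_sum]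
  simp_rw [Finset.sum_comm (t := (Finset.univ : Finset (Finset (Fin n))))]
  refine Finset.sum_congr rfl fun T _ => Finset.sum_congr rfl fun p _ => ?_
  simp_rw [mul_mul_mul_comm _ _ (∏ i ∈ Finset.univ \ T, _), prod_swap_indicator]
  simp
  ring

lemma re_sum_swap_le {n : ℕ} (ψ : (Fin n → Fin 2) → ℂ) (hψ : ∑ x, star (ψ x) * ψ x = 1)
    (T : Finset (Fin n)) :
    (∑ p, vecMulVec ψ (star ψ) p.1 (swapOn T p).1
      * vecMulVec ψ (star ψ) p.2 (swapOn T p).2).re ≤ 1 := by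
  set f : (Fin n → Fin 2) × (Fin n → Fin 2) → ℝ := fun p => ‖ψ p.1‖ * ‖ψ p.2‖ with hf
  have hnorm : ∑ x, ‖ψ x‖ ^ 2 = 1 := by
    have h (x) : star (ψ x) * ψ x = ((‖ψ x‖ ^ 2 : ℝ) : ℂ) := by
      rw [Complex.star_def, Complex.conj_mul']
      push_cast
      rfl
    simp_rw [h] at hψ
    exact_mod_cast hψ
  have hsum : ∑ p, f p ^ 2 = 1 := by
    simp only [hf, mul_pow, Fintype.sum_prod_type, ← Finset.mul_sum, hnorm, mul_one]
  have hswap : ∑ p, f (swapOn T p) ^ 2 = 1 := by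
    rw [← hsum]
    exact Equiv.sum_comp (swapOn_involutive T).toPerm (fun p => f p ^ 2)
  rw [Complex.re_sum]
  calc _ ≤ ∑ p, (f p ^ 2 + f (swapOn T p) ^ 2) / 2 := by
        refine Finset.sum_le_sum fun p _ => ?_
        refine (Complex.re_le_norm _).trans ?_
        simp only [vecMulVec_apply, Pi.star_apply, norm_mul, norm_star]
        have h := two_mul_le_add_sq (f p) (f (swapOn T p))
        simp only [hf] at h ⊢
        linarith
    _ = 1 := by
        rw [← Finset.sum_div, Finset.sum_add_distrib, hsum, hswap]
        norm_num

lemma sum_sicBorn_sq_le {n : ℕ} (ψ : (Fin n → Fin 2) → ℂ) (hψ : ∑ x, star (ψ x) * ψ x = 1)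
    (S : Finset (Fin n)) :
    ∑ q : {i : Fin n // i ∈ S} → Fin 4, sicBorn (vecMulVec ψ (star ψ)) S q ^ 2
      ≤ (1 / 3 : ℝ) ^ S.card := by
  have h := congrArg Complex.re
    (sum_sicBorn_sq (posSemidef_vecMulVec_self_star ψ).isHermitian S)
  have hw (T : Finset (Fin n)) : ((∏ i ∈ T, if i ∈ S then 1 / 6 else 0)
      * ∏ i ∈ Finset.univ \ T, if i ∈ S then 1 / 6 else 1 : ℂ)
      = (((∏ i ∈ T, if i ∈ S then 1 / 6 else 0)
        * ∏ i ∈ Finset.univ \ T, if i ∈ S then 1 / 6 else 1 : ℝ) : ℂ) := by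
    push_cast
    simp only [apply_ite Complex.ofReal]
    push_cast
    rfl
  simp_rw [hw, Complex.re_sum, Complex.re_ofReal_mul] at h
  rw [Complex.ofReal_re] at h
  rw [h]
  calc _ ≤ ∑ T : Finset (Fin n), ((∏ i ∈ T, if i ∈ S then 1 / 6 else 0)
        * ∏ i ∈ Finset.univ \ T, if i ∈ S then 1 / 6 else 1 : ℝ) := by
        refine Finset.sum_le_sum fun T _ => mul_le_of_le_one_right ?_ (re_sum_swap_le ψ hψ T)
        refine mul_nonneg (Finset.prod_nonneg fun i _ => ?_) (Finset.prod_nonneg fun i _ => ?_) <;>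
          split_ifs <;> norm_num
    _ = ∏ i, ((if i ∈ S then 1 / 6 else 0) + (if i ∈ S then 1 / 6 else 1) : ℝ) := by
        rw [Finset.prod_add, Finset.powerset_univ]
    _ = ∏ i, (if i ∈ S then 1 / 3 else 1 : ℝ) := by
        refine Finset.prod_congr rfl fun i _ => ?_
        split_ifs <;> norm_num
    _ = (1 / 3 : ℝ) ^ S.card := by simp [Finset.prod_ite_mem]

/-- **Bounds on the SIC outcome distribution**: for any density matrix `ρ`,
`P(q) ≤ 2^{-s}` and `∑_q P(q)³ ≤ 2^{-s} ∑_q P(q)²`; moreover if `ρ` is pure then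
`∑_q P(q)² ≤ 3^{-s}` and hence `∑_q P(q)³ ≤ 6^{-s}`. -/
theorem SIC_probability_bounds (n : ℕ) (ρ : QMat n)
    (hρ : ρ.PosSemidef) (htr : Matrix.trace ρ = 1)
    (S : Finset (Fin n)) (hS : S.Nonempty) :
    (∀ q : ({i : Fin n // i ∈ S} → Fin 4), sicBorn ρ S q ≤ (1 / 2 : ℝ) ^ S.card) ∧
    ((∑ q : ({i : Fin n // i ∈ S} → Fin 4), (sicBorn ρ S q) ^ 3)
      ≤ (1 / 2 : ℝ) ^ S.card * ∑ q : ({i : Fin n // i ∈ S} → Fin 4), (sicBorn ρ S q) ^ 2) ∧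
    (∀ ψ : (Fin n → Fin 2) → ℂ, (∑ x, star (ψ x) * ψ x) = 1 →
      ρ = Matrix.vecMulVec ψ (star ψ) →
      (∑ q : ({i : Fin n // i ∈ S} → Fin 4), (sicBorn ρ S q) ^ 2) ≤ (1 / 3 : ℝ) ^ S.card ∧
      (∑ q : ({i : Fin n // i ∈ S} → Fin 4), (sicBorn ρ S q) ^ 3) ≤ (1 / 6 : ℝ) ^ S.card) := by
  have hle := sicBorn_le hρ htr S
  have hcube : ∑ q, sicBorn ρ S q ^ 3 ≤ (1 / 2 : ℝ) ^ S.card * ∑ q, sicBorn ρ S q ^ 2 := by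
    rw [Finset.mul_sum]
    refine Finset.sum_le_sum fun q _ => ?_
    rw [pow_succ' _ 2]
    exact mul_le_mul_of_nonneg_right (hle q) (sq_nonneg _)
  refine ⟨hle, hcube, fun ψ hψ hρψ => ?_⟩
  have hsq : ∑ q, sicBorn ρ S q ^ 2 ≤ (1 / 3 : ℝ) ^ S.card :=
    hρψ ▸ sum_sicBorn_sq_le ψ hψ S
  refine ⟨hsq, hcube.trans ?_⟩
  calc _ ≤ (1 / 2 : ℝ) ^ S.card * (1 / 3 : ℝ) ^ S.card := by gcongr
    _ = (1 / 6 : ℝ) ^ S.card := by rw [← mul_pow]; norm_num
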